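/- For every integer m ≥ 0, the constant term (the coefficient of q⁰ in the Laurent expansion in q, valid for 0 < |q| < 1) of the function E*(2τ)·( h(τ)^{m+2} − 64·h(τ)^{m} ) vanishes. -/

import Mathlib

noncomputable section
open Complex Real

/-- `q = e^{2πiτ}`. -/
def nome (τ : ℂ) : ℂ := Complex.exp (2 * (π : ℂ) * I * τ)

/-- Dedekind eta function `η(τ) = e^{πiτ/12} ∏_{n≥1} (1 − qⁿ)`. -/
def dedekindEta (τ : ℂ) : ℂ :=
  Complex.exp ((π : ℂ) * I * τ / 12) * ∏' n : ℕ, (1 - nome τ ^ (n + 1))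

/-- Sum of the positive odd divisors of `n`. -/
def sigmaOdd (n : ℕ) : ℕ := ∑ d ∈ n.divisors.filter (fun d => Odd d), d

/-- `E*(τ) = 1 + 24 Σ_{n≥1} σ_odd(n) qⁿ`. -/
def Estar (τ : ℂ) : ℂ := 1 + 24 * ∑' n : ℕ, (sigmaOdd (n + 1) : ℂ) * nome τ ^ (n + 1)

/-- `h(τ) = (η(2τ)⁴/η(4τ)⁸)·E*(2τ)`. -/
def hfun (τ : ℂ) : ℂ := dedekindEta (2 * τ) ^ 4 / dedekindEta (4 * τ) ^ 8 * Estar (2 * τ)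

/-!
Write `t(τ) = η(τ)²⁴ / η(2τ)²⁴` for the Hauptmodul of `Γ₀(2)`. The function
`η(τ)⁸ / η(2τ)¹⁶ · E*(τ)² - t(τ)` is invariant under `Γ₀(2)`, holomorphic on `ℍ` and bounded at both
cusps, hence constant; at the cusp `0` it takes the value `64`, so `h(τ)² = t(2τ) + 64`. Since `t`
has logarithmic derivative `-2πi E*(τ)`, differentiating gives `h · dh/dτ = -2πi E*(2τ) (h² - 64)`,
so `E*(2τ) (h^(m+2) - 64 h^m)` is a constant multiple of the derivative of `h^(m+2)`. The derivative
of a function of period `1` integrates to zero over a period, i.e. has constant term zero.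
-/

open UpperHalfPlane hiding I
open EisensteinSeries Filter Matrix MatrixGroups Metric ModularForm ModularGroup Topology
open scoped ArithmeticFunction.sigma Manifold Pointwise

section Nome

lemma nome_ne_zero (z : ℂ) : nome z ≠ 0 := Complex.exp_ne_zero _

lemma norm_nome_lt_one {z : ℂ} (hz : 0 < z.im) : ‖nome z‖ < 1 :=
  UpperHalfPlane.norm_exp_two_pi_I_lt_one ⟨z, hz⟩

lemma nome_two_mul (z : ℂ) : nome (2 * z) = nome z ^ 2 := by
  rw [nome, nome, ← Complex.exp_nat_mul]
  push_cast
  ring_nf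

lemma nome_add_one (z : ℂ) : nome (z + 1) = nome z := by
  rw [nome, nome, mul_add, mul_one, Complex.exp_add, Complex.exp_two_pi_mul_I, mul_one]

lemma differentiable_nome : Differentiable ℂ nome := by
  unfold nome
  fun_prop

lemma tendsto_nome_div_atImInfty {h : ℝ} (hh : 0 < h) :
    Tendsto (fun τ : ℍ ↦ nome (τ / h)) atImInfty (𝓝 0) := by
  refine (qParam_tendsto_atImInfty hh).congr fun τ ↦ ?_
  rw [Function.Periodic.qParam, nome, mul_div_assoc]

end Nome

section LevelTwoFunctions

section

attribute [local instance] arrowAction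

lemma inv_smul_eq_comp_smul (f : ℍ → ℂ) (γ : SL(2, ℤ)) : γ⁻¹ • f = fun τ ↦ f (γ • τ) := by
  change (fun τ ↦ f (γ⁻¹⁻¹ • τ)) = _
  rw [inv_inv]

lemma comp_smul_mem_of_finite {s : Set (ℍ → ℂ)} (hs : s.Finite)
    (hS : ∀ f ∈ s, (fun τ ↦ f (S • τ)) ∈ s) (hT : ∀ f ∈ s, (fun τ ↦ f (T • τ)) ∈ s)
    {f : ℍ → ℂ} (hf : f ∈ s) (γ : SL(2, ℤ)) : (fun τ ↦ f (γ • τ)) ∈ s := by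
  have inv_mem_stabilizer {g : SL(2, ℤ)} (hg : ∀ f ∈ s, (fun τ ↦ f (g • τ)) ∈ s) :
      g⁻¹ ∈ MulAction.stabilizer SL(2, ℤ) s := by
    rw [MulAction.mem_stabilizer_set_iff_smul_set_subset hs]
    rintro _ ⟨f, hf, rfl⟩
    simpa only [inv_smul_eq_comp_smul] using hg f hf
  have closure_le : Subgroup.closure {S, T} ≤ MulAction.stabilizer SL(2, ℤ) s := by
    rw [Subgroup.closure_le]
    rintro _ (rfl | rfl)
    · exact inv_mem_iff.mp (inv_mem_stabilizer hS)
    · exact inv_mem_iff.mp (inv_mem_stabilizer hT)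
  have inv_mem : γ⁻¹ ∈ MulAction.stabilizer SL(2, ℤ) s :=
    closure_le (by simp [SpecialLinearGroup.SL2Z_generators])
  exact inv_smul_eq_comp_smul f γ ▸ (MulAction.mem_stabilizer_set.mp inv_mem f).mpr hf

lemma slash_zero_eq_comp_smul (f : ℍ → ℂ) (γ : SL(2, ℤ)) :
    f ∣[(0 : ℤ)] γ = fun τ ↦ f (γ • τ) := by
  ext τ
  simp [SL_slash_apply]

theorem exists_eq_const_of_finite_translates {f : ℍ → ℂ} (hf : MDiff f)
    (hfin : (Set.range fun (γ : SL(2, ℤ)) (τ : ℍ) ↦ f (γ • τ)).Finite)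
    (hbdd : ∀ γ : SL(2, ℤ), IsBoundedAtImInfty fun τ ↦ f (γ • τ)) :
    ∃ c, f = Function.const ℍ c := by
  let Γ := MulAction.stabilizer SL(2, ℤ) f
  have orbit_finite : (MulAction.orbit SL(2, ℤ) f).Finite := by
    refine hfin.subset ?_
    rintro _ ⟨γ, rfl⟩
    exact ⟨γ⁻¹, rfl⟩
  have : Γ.FiniteIndex := by
    refine ⟨?_⟩
    rw [MulAction.index_stabilizer]
    exact (Set.ncard_pos orbit_finite).mpr (MulAction.nonempty_orbit f) |>.ne'
  let F : ModularForm (Γ.map (SpecialLinearGroup.mapGL ℝ)) 0 :=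
    { toFun := f
      slash_action_eq' := by
        rintro _ ⟨γ, hγ, rfl⟩
        have inv_smul_eq : γ⁻¹ • f = f := MulAction.mem_stabilizer_iff.mp (inv_mem hγ)
        exact (slash_zero_eq_comp_smul f γ).trans (inv_smul_eq_comp_smul f γ ▸ inv_smul_eq)
      holo' := hf
      bdd_at_cusps' := by
        intro c hc
        rw [Subgroup.IsArithmetic.isCusp_iff_isCusp_SL2Z] at hc
        rw [OnePoint.isBoundedAt_iff_forall_SL2Z hc]
        intro γ _
        rw [slash_zero_eq_comp_smul]
        exact hbdd γ }
  exact ModularForm.eq_const_of_weight_zero F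

end

theorem exists_eq_const_of_levelTwo {f : ℍ → ℂ} (hf : MDiff f)
    (hT : ∀ τ, f (T • τ) = f τ) (hST : ∀ τ, f (S • T • T • τ) = f (S • τ))
    (hbdd : IsBoundedAtImInfty f) (hbddS : IsBoundedAtImInfty fun τ ↦ f (S • τ)) :
    ∃ c, f = Function.const ℍ c := by
  set s : Set (ℍ → ℂ) := {f, fun τ ↦ f (S • τ), fun τ ↦ f (S • T • τ)} with hs
  have hSS (τ : ℍ) : S • S • τ = τ := by
    rw [smul_smul, show S * S = -1 by decide, ModularGroup.SL_neg_smul, one_smul]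
  have hSTS (τ : ℍ) : f (S • T • S • τ) = f (S • T • τ) := by
    calc f (S • T • S • τ) = f ((T * S * T * S) • τ) := by simp only [mul_smul, hT]
      _ = f (S • T • T • T⁻¹ • τ) := by rw [show T * S * T * S = S * T⁻¹ by decide, mul_smul, hST]
      _ = f (S • T • τ) := by rw [smul_inv_smul]
  have comp_S_mem : ∀ g ∈ s, (fun τ ↦ g (S • τ)) ∈ s := by
    rintro g (rfl | rfl | rfl) <;>
      simp only [hs, hSS, hSTS, Set.mem_insert_iff, Set.mem_singleton_iff, true_or, or_true]
  have comp_T_mem : ∀ g ∈ s, (fun τ ↦ g (T • τ)) ∈ s := by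
    rintro g (rfl | rfl | rfl) <;>
      simp only [hs, hT, hST, Set.mem_insert_iff, Set.mem_singleton_iff, true_or, or_true]
  have translate_mem (γ : SL(2, ℤ)) : (fun τ ↦ f (γ • τ)) ∈ s :=
    comp_smul_mem_of_finite (by simp [hs]) comp_S_mem comp_T_mem (by simp [hs]) γ
  have bounded : ∀ g ∈ s, IsBoundedAtImInfty g := by
    rintro g (rfl | rfl | rfl)
    · exact hbdd
    · exact hbddS
    · exact hbddS.comp_tendsto <|
        tendsto_smul_atImInfty (g := SpecialLinearGroup.mapGL ℝ T) (by
          simp [SpecialLinearGroup.mapGL_coe_matrix, coe_T])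
  exact exists_eq_const_of_finite_translates hf
    (Set.Finite.subset (by simp [hs]) (Set.range_subset_iff.mpr translate_mem))
    fun γ ↦ bounded _ (translate_mem γ)

lemma coe_T_smul (τ : ℍ) : ((T • τ : ℍ) : ℂ) = τ + 1 := by
  rw [modular_T_smul, coe_vadd, ofReal_one, add_comm]

theorem eq_of_nome_expansions {f : ℍ → ℂ} {G G₀ : ℂ → ℂ} (hG : DifferentiableOn ℂ G (ball 0 1))
    (hG₀ : ContinuousAt G₀ 0) (hf : ∀ τ, f τ = G (nome τ))
    (hfS : ∀ τ, f (S • τ) = G₀ (nome (τ / 2))) (τ : ℍ) : f τ = G₀ 0 := by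
  have tendsto_S : Tendsto (fun τ ↦ f (S • τ)) atImInfty (𝓝 (G₀ 0)) := by
    simp only [hfS]
    exact hG₀.tendsto.comp (tendsto_nome_div_atImInfty two_pos)
  have tendsto_f : Tendsto f atImInfty (𝓝 (G 0)) := by
    rw [funext hf]
    have hG_cont : ContinuousAt G 0 := (hG.differentiableAt (ball_mem_nhds 0 one_pos)).continuousAt
    simpa using! hG_cont.tendsto.comp (tendsto_nome_div_atImInfty one_pos)
  have mdiff_f : MDiff f := by
    rw [UpperHalfPlane.mdifferentiable_iff]
    refine (hG.comp differentiable_nome.differentiableOn fun z hz ↦ ?_).congr fun z hz ↦ ?_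
    · simpa using norm_nome_lt_one hz
    · simp [hf, ofComplex_apply_of_im_pos hz]
  obtain ⟨c, rfl⟩ := exists_eq_const_of_levelTwo mdiff_f
    (fun τ ↦ by rw [hf, hf, coe_T_smul, nome_add_one])
    (fun τ ↦ by
      rw [hfS, hfS, coe_T_smul, coe_T_smul, ← nome_add_one (τ / 2)]
      ring_nf)
    (tendsto_f.isBigO_one ℝ) (tendsto_S.isBigO_one ℝ)
  exact tendsto_nhds_unique tendsto_const_nhds tendsto_S

end LevelTwoFunctions

section ConstantTerm

lemma nome_add_ofReal_zpow (z : ℂ) (x : ℝ) (n : ℤ) :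
    nome (z + x) ^ n = nome z ^ n * cexp (2 * π * I * n * x) := by
  rw [nome, nome, ← Complex.exp_int_mul, ← Complex.exp_int_mul, ← Complex.exp_add]
  ring_nf

lemma norm_nome_add_ofReal (z : ℂ) (x : ℝ) : ‖nome (z + x)‖ = ‖nome z‖ := by
  simp [nome, Complex.norm_exp]

lemma integral_nome_add_ofReal_zpow (z : ℂ) (n : ℤ) :
    ∫ x in (0 : ℝ)..1, nome (z + x) ^ n = if n = 0 then 1 else 0 := by
  simp only [nome_add_ofReal_zpow, intervalIntegral.integral_const_mul]
  split_ifs with hn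
  · simp [hn]
  · have hexp : cexp (2 * π * I * n) = 1 :=
      Complex.exp_eq_one_iff.mpr ⟨n, by ring⟩
    rw [integral_exp_mul_complex (by simp [hn, Real.pi_ne_zero])]
    simp [hexp]

theorem integral_add_ofReal_eq_coeff_zero {c : ℤ → ℂ} {f : ℂ → ℂ} {z : ℂ}
    (hf : ∀ x : ℝ, HasSum (fun n ↦ c n * nome (z + x) ^ n) (f (z + x))) :
    ∫ x in (0 : ℝ)..1, f (z + x) = c 0 := by
  have summable_norm : Summable fun n ↦ ‖c n * nome z ^ n‖ := by
    simpa using (hf 0).summable.norm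
  have term_cont (n : ℤ) : Continuous fun x : ℝ ↦ c n * nome (z + x) ^ n := by
    simp only [nome_add_ofReal_zpow]
    fun_prop
  have hasSum_integral := intervalIntegral.hasSum_integral_of_dominated_convergence
    (μ := MeasureTheory.volume) (a := 0) (b := 1)
    (fun n _ ↦ ‖c n * nome z ^ n‖) (fun n ↦ (term_cont n).aestronglyMeasurable)
    (fun n ↦ .of_forall fun x _ ↦ by rw [norm_mul, norm_mul, norm_zpow, norm_zpow,
      norm_nome_add_ofReal])
    (.of_forall fun _ _ ↦ summable_norm) (by simp) (.of_forall fun x _ ↦ hf x)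
  have term_integral (n : ℤ) :
      ∫ x in (0 : ℝ)..1, c n * nome (z + x) ^ n = if n = 0 then c 0 else 0 := by
    rw [intervalIntegral.integral_const_mul, integral_nome_add_ofReal_zpow]
    split_ifs with hn <;> simp [hn]
  simp only [term_integral] at hasSum_integral
  exact hasSum_integral.unique (hasSum_ite_eq 0 (c 0))

theorem coeff_zero_eq_zero_of_hasDerivAt {c : ℤ → ℂ} {f g : ℂ → ℂ}
    (hg : ∀ z : ℂ, 0 < z.im → HasDerivAt g (f z) z) (hg_per : ∀ z, g (z + 1) = g z)
    (hf : ∀ z : ℂ, 0 < z.im → HasSum (fun n ↦ c n * nome z ^ n) (f z)) : c 0 = 0 := by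
  have im_pos (x : ℝ) : 0 < (I + x).im := by simp
  have f_cont : Continuous fun x : ℝ ↦ f (I + x) := by
    have g_diff : DifferentiableOn ℂ g upperHalfPlaneSet :=
      fun z hz ↦ (hg z hz).differentiableAt.differentiableWithinAt
    have f_diff : DifferentiableOn ℂ f upperHalfPlaneSet :=
      (g_diff.deriv isOpen_upperHalfPlaneSet).congr fun z hz ↦ (hg z hz).deriv.symm
    exact f_diff.continuousOn.comp_continuous (by fun_prop) im_pos
  have g_deriv (x : ℝ) : HasDerivAt (fun x : ℝ ↦ g (I + x)) (f (I + x)) x := by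
    simpa using! ((hg _ (im_pos x)).comp_const_add I x).comp_ofReal
  calc c 0 = ∫ x in (0 : ℝ)..1, f (I + x) :=
        (integral_add_ofReal_eq_coeff_zero fun x ↦ hf _ (im_pos x)).symm
    _ = g (I + (1 : ℝ)) - g (I + (0 : ℝ)) :=
        intervalIntegral.integral_eq_sub_of_hasDerivAt (fun x _ ↦ g_deriv x)
          (f_cont.intervalIntegrable 0 1)
    _ = 0 := by simp [hg_per]

end ConstantTerm

section Estar

lemma sigma_one_of_odd {n : ℕ} (hn : Odd n) : σ 1 n = sigmaOdd n := by
  rw [ArithmeticFunction.sigma_one_apply, sigmaOdd, Finset.filter_true_of_mem]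
  exact fun d hd ↦ hn.of_dvd_nat (Nat.dvd_of_mem_divisors hd)

lemma sigma_one_two_mul (n : ℕ) : σ 1 (2 * n) = sigmaOdd (2 * n) + 2 * σ 1 n := by
  rcases eq_or_ne n 0 with rfl | hn
  · simp [sigmaOdd]
  have even_divisors :
      {d ∈ (2 * n).divisors | ¬Odd d} = n.divisors.image (2 * ·) := by
    ext d
    simp only [Finset.mem_filter, Finset.mem_image, Nat.mem_divisors, Nat.not_odd_iff_even]
    constructor
    · rintro ⟨⟨hd, -⟩, even_d⟩
      obtain ⟨e, rfl⟩ := even_d.two_dvd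
      exact ⟨e, ⟨Nat.dvd_of_mul_dvd_mul_left two_pos hd, hn⟩, rfl⟩
    · rintro ⟨e, ⟨he, -⟩, rfl⟩
      exact ⟨⟨Nat.mul_dvd_mul_left 2 he, by positivity⟩, even_two_mul e⟩
  rw [ArithmeticFunction.sigma_one_apply, ArithmeticFunction.sigma_one_apply, sigmaOdd,
    ← Finset.sum_filter_add_sum_filter_not _ (Odd ·), even_divisors,
    Finset.sum_image (mul_right_injective₀ two_ne_zero).injOn, Finset.mul_sum]

lemma summable_sigma_one_mul_pow {q : ℂ} (hq : ‖q‖ < 1) :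
    Summable fun n ↦ (σ 1 n : ℂ) * q ^ n := by
  refine .of_norm_bounded (summable_norm_pow_mul_geometric_of_norm_lt_one 2 hq) fun n ↦ ?_
  rw [norm_mul, norm_mul]
  gcongr
  rw [Complex.norm_natCast, norm_pow, Complex.norm_natCast]
  exact_mod_cast ArithmeticFunction.sigma_le_pow_succ 1 n

lemma hasSum_sigmaOdd_mul_pow {q : ℂ} (hq : ‖q‖ < 1) :
    HasSum (fun n ↦ (sigmaOdd (n + 1) : ℂ) * q ^ (n + 1))
      (∑' n, (σ 1 n : ℂ) * q ^ n - 2 * ∑' n, (σ 1 n : ℂ) * (q ^ 2) ^ n) := by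
  have hq2 : ‖q ^ 2‖ < 1 := by
    rw [norm_pow]
    exact pow_lt_one₀ (norm_nonneg _) hq two_ne_zero
  have hasSum_even : HasSum (fun n ↦ ((σ 1 n : ℂ) - sigmaOdd n) * q ^ n)
      (2 * ∑' n, (σ 1 n : ℂ) * (q ^ 2) ^ n) := by
    rw [← (mul_right_injective₀ (two_ne_zero (α := ℕ))).hasSum_iff]
    · refine ((summable_sigma_one_mul_pow hq2).hasSum.mul_left 2).congr_fun ?_
      intro n
      simp only [Function.comp_apply, sigma_one_two_mul, pow_mul]
      push_cast
      ring
    · intro n hn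
      have odd_n : Odd n := by
        rw [← Nat.not_even_iff_odd, even_iff_exists_two_mul]
        rintro ⟨k, rfl⟩
        exact hn ⟨k, rfl⟩
      rw [sigma_one_of_odd odd_n, sub_self, zero_mul]
  have hasSum_sub := (summable_sigma_one_mul_pow hq).hasSum.sub hasSum_even
  simp only [← sub_mul, sub_sub_cancel] at hasSum_sub
  simpa [sigmaOdd] using (hasSum_nat_add_iff' 1).mpr hasSum_sub

lemma E2_eq_one_sub_tsum_nome (τ : ℍ) :
    E2 τ = 1 - 24 * ∑' n, (σ 1 n : ℂ) * nome τ ^ n := by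
  rw [E2_eq_tsum_cexp,
    tsum_pnat_eq_tsum_succ (f := fun n ↦ (σ 1 n : ℂ) * cexp (2 * π * I * τ) ^ n),
    (summable_sigma_one_mul_pow (norm_nome_lt_one τ.im_pos)).tsum_eq_zero_add]
  simp [nome]

theorem Estar_eq_two_mul_E2_sub_E2 {w τ : ℍ} (h : (τ : ℂ) = 2 * w) :
    Estar w = 2 * E2 τ - E2 w := by
  rw [E2_eq_one_sub_tsum_nome, E2_eq_one_sub_tsum_nome, h, nome_two_mul, Estar,
    (hasSum_sigmaOdd_mul_pow (norm_nome_lt_one w.im_pos)).tsum_eq]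
  ring

lemma coe_S_smul (τ : ℍ) : ((S • τ : ℍ) : ℂ) = -1 / τ := by
  rw [modular_S_smul, coe_mk, inv_neg, neg_div, one_div]

lemma E2_S_smul (τ : ℍ) :
    E2 (S • τ) = (τ : ℂ) ^ 2 * E2 τ - 6 * I * τ / π := by
  have hτ : (τ : ℂ) ≠ 0 := τ.ne_zero
  simp only [E2, Pi.smul_apply, smul_eq_mul, G2_S_transform τ,
    riemannZeta_two]
  field_simp
  ring

theorem Estar_S_smul {w τ : ℍ} (h : (τ : ℂ) = 2 * w) :
    Estar ↑(S • τ) = -2 * (w : ℂ) ^ 2 * Estar w := by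
  have hS : ((S • w : ℍ) : ℂ) = 2 * ↑(S • τ) := by
    rw [coe_S_smul, coe_S_smul, h]
    field_simp
  rw [Estar_eq_two_mul_E2_sub_E2 hS, Estar_eq_two_mul_E2_sub_E2 h, E2_S_smul, E2_S_smul, h]
  ring

lemma differentiableOn_tsum_mul_pow {a : ℕ → ℂ} {e : ℕ → ℕ}
    (ha : ∀ q : ℂ, ‖q‖ < 1 → Summable fun n ↦ a n * q ^ e n) :
    DifferentiableOn ℂ (fun q ↦ ∑' n, a n * q ^ e n) (ball 0 1) := by
  intro q hq
  obtain ⟨r, hqr, hr1⟩ := exists_between (mem_ball_zero_iff.mp hq)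
  have hr0 : 0 ≤ r := (norm_nonneg q).trans hqr.le
  have summable_norm : Summable fun n ↦ ‖a n‖ * r ^ e n := by
    simpa [abs_of_nonneg hr0] using (ha r (by simpa [abs_of_nonneg hr0] using hr1)).norm
  have diff_ball : DifferentiableOn ℂ (fun q ↦ ∑' n, a n * q ^ e n) (ball 0 r) := by
    refine Complex.differentiableOn_tsum_of_summable_norm summable_norm (fun n ↦ by fun_prop)
      isOpen_ball fun n w hw ↦ ?_
    rw [norm_mul, norm_pow]
    gcongr
    exact (mem_ball_zero_iff.mp hw).le
  exact (diff_ball.differentiableAt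
    (isOpen_ball.mem_nhds (mem_ball_zero_iff.mpr hqr))).differentiableWithinAt

/-- The `q`-expansion of `Estar`, as a function on the unit disc. -/
def estarSeries (q : ℂ) : ℂ := 1 + 24 * ∑' n : ℕ, (sigmaOdd (n + 1) : ℂ) * q ^ (n + 1)

lemma Estar_eq_estarSeries (z : ℂ) : Estar z = estarSeries (nome z) := rfl

lemma estarSeries_zero : estarSeries 0 = 1 := by simp [estarSeries]

lemma differentiableOn_estarSeries : DifferentiableOn ℂ estarSeries (ball 0 1) :=
  ((differentiableOn_tsum_mul_pow fun _ hq ↦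
    (hasSum_sigmaOdd_mul_pow hq).summable).const_mul 24).const_add 1

end Estar

section Eta

lemma dedekindEta_eq_eta : dedekindEta = ModularForm.eta := by
  ext z
  rw [dedekindEta, ModularForm.eta, Function.Periodic.qParam]
  simp only [ModularForm.eta_q, Function.Periodic.qParam, nome]
  push_cast
  ring_nf

lemma dedekindEta_ne_zero {z : ℂ} (hz : 0 < z.im) : dedekindEta z ≠ 0 :=
  dedekindEta_eq_eta ▸ eta_ne_zero hz

lemma hasDerivAt_dedekindEta (τ : ℍ) :
    HasDerivAt dedekindEta (π * I / 12 * E2 τ * dedekindEta τ) τ := by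
  have h := logDeriv_eta_eq_E2 τ
  rw [← dedekindEta_eq_eta, logDeriv_apply, div_eq_iff (dedekindEta_ne_zero τ.im_pos)] at h
  rw [← h, dedekindEta_eq_eta]
  exact (differentiableAt_eta_of_mem_upperHalfPlaneSet τ.im_pos).hasDerivAt

lemma dedekindEta_S_smul_pow_eight (τ : ℍ) :
    dedekindEta ↑(S • τ) ^ 8 = (τ : ℂ) ^ 4 * dedekindEta τ ^ 8 := by
  have sqrt_pow_eight (z : ℂ) : Complex.sqrt z ^ 8 = z ^ 4 := by
    rw [show 8 = 2 * 4 by rfl, pow_mul, Complex.sqrt, ← Complex.cpow_nat_mul]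
    simp
  have eta_S : dedekindEta ↑(S • τ) =
      (Complex.sqrt I)⁻¹ * (Complex.sqrt τ * dedekindEta τ) := by
    rw [coe_S_smul, dedekindEta_eq_eta]
    simpa using eta_comp_eq_csqrt_I_inv τ.im_pos
  rw [eta_S, mul_pow, mul_pow, inv_pow, sqrt_pow_eight, sqrt_pow_eight, I_pow_four, inv_one,
    one_mul]

/-- The Euler product `∏ₙ (1 − qⁿ)`, which is `dedekindEta` up to the factor `q^(1/24)`. -/
def eulerProduct (q : ℂ) : ℂ := ∏' n : ℕ, (1 - q ^ (n + 1))

lemma eulerProduct_zero : eulerProduct 0 = 1 := by simp [eulerProduct]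

lemma eulerProduct_ne_zero {q : ℂ} (hq : ‖q‖ < 1) : eulerProduct q ≠ 0 := by
  refine tprod_one_add_ne_zero_of_summable (f := fun n ↦ -q ^ (n + 1)) (fun n hn ↦ ?_) ?_
  · have norm_lt : ‖q ^ (n + 1)‖ < 1 := by
      rw [norm_pow]
      exact pow_lt_one₀ (norm_nonneg _) hq n.succ_ne_zero
    rw [← sub_eq_add_neg, sub_eq_zero] at hn
    simp [← hn] at norm_lt
  · simpa using (summable_nat_add_iff 1).mpr (summable_geometric_of_lt_one (norm_nonneg _) hq)

lemma differentiableOn_eulerProduct : DifferentiableOn ℂ eulerProduct (ball 0 1) :=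
  differentiableOn_tprod_one_sub_pow

end Eta

section EtaQuotient

/-- The eta quotient `η(z)ᵃ / η(2z)ᵇ`. For `(a, b) = (24, 24)` it is a Hauptmodul of `Γ₀(2)`, and
for `(4, 8)`, evaluated at `2z`, it is the first factor of `hfun z`. -/
def etaQuotient (a b : ℕ) (z : ℂ) : ℂ := dedekindEta z ^ a / dedekindEta (2 * z) ^ b

/-- The power series of `q^(b/12 - a/24) * etaQuotient a b`, as a function on the unit disc. -/
def etaQuotientSeries (a b : ℕ) (q : ℂ) : ℂ := eulerProduct q ^ a / eulerProduct (q ^ 2) ^ b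

lemma etaQuotientSeries_zero (a b : ℕ) : etaQuotientSeries a b 0 = 1 := by
  simp [etaQuotientSeries, eulerProduct_zero]

lemma differentiableOn_etaQuotientSeries (a b : ℕ) :
    DifferentiableOn ℂ (etaQuotientSeries a b) (ball 0 1) := by
  have mapsTo_sq : Set.MapsTo (fun q : ℂ ↦ q ^ 2) (ball 0 1) (ball 0 1) := fun q hq ↦ by
    simpa using pow_lt_one₀ (norm_nonneg q) (mem_ball_zero_iff.mp hq) two_ne_zero
  exact (differentiableOn_eulerProduct.pow a).div
    ((differentiableOn_eulerProduct.comp (by fun_prop) mapsTo_sq).pow b)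
    fun q hq ↦ pow_ne_zero b (eulerProduct_ne_zero (mem_ball_zero_iff.mp (mapsTo_sq hq)))

lemma etaQuotient_eq_exp_mul (a b : ℕ) (z : ℂ) :
    etaQuotient a b z = cexp (π * I * z * (a - 2 * b) / 12) * etaQuotientSeries a b (nome z) := by
  rw [etaQuotient, dedekindEta, dedekindEta, nome_two_mul, mul_pow, mul_pow, mul_div_mul_comm,
    ← Complex.exp_nat_mul, ← Complex.exp_nat_mul, ← Complex.exp_sub]
  congr 2
  ring

lemma etaQuotient_eq_inv_nome_mul {a b : ℕ} (h : 2 * b = a + 24) (z : ℂ) :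
    etaQuotient a b z = (nome z)⁻¹ * etaQuotientSeries a b (nome z) := by
  have hb : (2 : ℂ) * b = a + 24 := by exact_mod_cast h
  rw [etaQuotient_eq_exp_mul, hb, nome, ← Complex.exp_neg]
  ring_nf

lemma etaQuotient_S_smul (a b : ℕ) {w τ : ℍ} (h : (τ : ℂ) = 2 * w) :
    etaQuotient (8 * a) (8 * b) ↑(S • τ) =
      ((τ : ℂ) ^ 4 * dedekindEta τ ^ 8) ^ a / ((w : ℂ) ^ 4 * dedekindEta w ^ 8) ^ b := by
  have hS : 2 * ((S • τ : ℍ) : ℂ) = ↑(S • w) := by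
    rw [coe_S_smul, coe_S_smul, h]
    field_simp
  rw [etaQuotient, hS, pow_mul, pow_mul, dedekindEta_S_smul_pow_eight, dedekindEta_S_smul_pow_eight]

theorem etaQuotient_mul_Estar_sq_sub_S_smul {w τ : ℍ} (h : (τ : ℂ) = 2 * w) :
    etaQuotient 8 16 ↑(S • τ) * Estar ↑(S • τ) ^ 2 - etaQuotient 24 24 ↑(S • τ) =
      (64 * (etaQuotient 8 16 w * Estar w ^ 2) - 4096) / etaQuotient 24 24 w := by
  have hw : (w : ℂ) ≠ 0 := w.ne_zero
  have eta_τ_ne : dedekindEta (2 * w) ≠ 0 := h ▸ dedekindEta_ne_zero τ.im_pos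
  rw [etaQuotient_S_smul 1 2 h, etaQuotient_S_smul 3 3 h, Estar_S_smul h, h, etaQuotient,
    etaQuotient]
  field_simp
  ring

/-- The power series of `q * etaQuotient 8 16 * Estar ^ 2`, as a function on the unit disc. -/
def estarSqSeries (q : ℂ) : ℂ := etaQuotientSeries 8 16 q * estarSeries q ^ 2

lemma etaQuotient_mul_Estar_sq_eq_inv_nome_mul (z : ℂ) :
    etaQuotient 8 16 z * Estar z ^ 2 = (nome z)⁻¹ * estarSqSeries (nome z) := by
  rw [etaQuotient_eq_inv_nome_mul rfl, Estar_eq_estarSeries, estarSqSeries, mul_assoc]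

lemma estarSqSeries_zero : estarSqSeries 0 = 1 := by
  rw [estarSqSeries, etaQuotientSeries_zero, estarSeries_zero, one_pow, mul_one]

lemma differentiableOn_estarSqSeries : DifferentiableOn ℂ estarSqSeries (ball 0 1) :=
  (differentiableOn_etaQuotientSeries 8 16).mul (differentiableOn_estarSeries.pow 2)

lemma etaQuotient_mul_Estar_sq_sub_S_smul_eq_nome (τ : ℍ) :
    etaQuotient 8 16 ↑(S • τ) * Estar ↑(S • τ) ^ 2 - etaQuotient 24 24 ↑(S • τ) =
      (64 * estarSqSeries (nome (τ / 2)) - 4096 * nome (τ / 2)) /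
        etaQuotientSeries 24 24 (nome (τ / 2)) := by
  let w : ℍ := ⟨τ / 2, by simpa using τ.im_pos⟩
  have nome_ne : nome (τ / 2) ≠ 0 := nome_ne_zero _
  rw [etaQuotient_mul_Estar_sq_sub_S_smul (w := w) (mul_div_cancel₀ _ two_ne_zero).symm,
    etaQuotient_mul_Estar_sq_eq_inv_nome_mul, etaQuotient_eq_inv_nome_mul rfl]
  simp only [w]
  field_simp

theorem etaQuotient_mul_Estar_sq (τ : ℍ) :
    etaQuotient 8 16 τ * Estar τ ^ 2 = etaQuotient 24 24 τ + 64 := by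
  let D (q : ℂ) : ℂ := estarSqSeries q - etaQuotientSeries 24 24 q
  let G₀ (q : ℂ) : ℂ := (64 * estarSqSeries q - 4096 * q) / etaQuotientSeries 24 24 q
  have ball_mem : ball (0 : ℂ) 1 ∈ 𝓝 0 := ball_mem_nhds 0 one_pos
  have D_zero : D 0 = 0 := by
    simp only [D, estarSqSeries_zero, etaQuotientSeries_zero, sub_self]
  have D_diff : DifferentiableOn ℂ D (ball 0 1) :=
    differentiableOn_estarSqSeries.sub (differentiableOn_etaQuotientSeries 24 24)
  have G₀_cont : ContinuousAt G₀ 0 := by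
    refine ContinuousAt.div ?_ ?_ ?_
    · exact (continuousAt_const.mul (differentiableOn_estarSqSeries.differentiableAt
        ball_mem).continuousAt).sub (by fun_prop)
    · exact ((differentiableOn_etaQuotientSeries 24 24).differentiableAt ball_mem).continuousAt
    · simp [etaQuotientSeries_zero]
  have expansion_infty (τ : ℍ) : etaQuotient 8 16 τ * Estar τ ^ 2 - etaQuotient 24 24 τ =
      dslope D 0 (nome τ) := by
    rw [dslope_of_ne _ (nome_ne_zero τ), slope_def_field, D_zero, sub_zero, sub_zero,
      etaQuotient_mul_Estar_sq_eq_inv_nome_mul, etaQuotient_eq_inv_nome_mul rfl]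
    ring
  have key := eq_of_nome_expansions ((differentiableOn_dslope ball_mem).mpr D_diff) G₀_cont
    expansion_infty etaQuotient_mul_Estar_sq_sub_S_smul_eq_nome τ
  simp only [G₀, estarSqSeries_zero, etaQuotientSeries_zero] at key
  linear_combination key

end EtaQuotient

section Derivative

lemma hasDerivAt_etaQuotient (a b : ℕ) {w τ : ℍ} (h : (τ : ℂ) = 2 * w) :
    HasDerivAt (etaQuotient a b)
      (π * I / 12 * (a * E2 w - 2 * b * E2 τ) * etaQuotient a b w) w := by
  have pow_deriv {f : ℂ → ℂ} {l : ℂ} (n : ℕ) (hf : HasDerivAt f (l * f w) w) :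
      HasDerivAt (fun z ↦ f z ^ n) (n * l * f w ^ n) w := by
    refine (hf.fun_pow n).congr_deriv ?_
    rcases n with _ | n
    · simp
    · rw [Nat.add_sub_cancel]
      ring
  have eta_two_mul_ne : dedekindEta (2 * w) ^ b ≠ 0 :=
    pow_ne_zero b (h ▸ dedekindEta_ne_zero τ.im_pos)
  have eta_two_mul_deriv : HasDerivAt (fun z ↦ dedekindEta (2 * z))
      (π * I / 6 * E2 τ * dedekindEta (2 * w)) w := by
    have eta_deriv := hasDerivAt_dedekindEta τ
    rw [h] at eta_deriv
    exact (eta_deriv.comp (w : ℂ) (hasDerivAt_const_mul 2)).congr_deriv (by ring)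
  refine ((pow_deriv a (hasDerivAt_dedekindEta w)).fun_div (pow_deriv b eta_two_mul_deriv)
    eta_two_mul_ne).congr_deriv ?_
  rw [etaQuotient]
  field_simp
  ring

lemma hasDerivAt_etaQuotient_self (n : ℕ) {w τ : ℍ} (h : (τ : ℂ) = 2 * w) :
    HasDerivAt (etaQuotient n n) (-(π * I * n / 12) * Estar w * etaQuotient n n w) w := by
  refine (hasDerivAt_etaQuotient n n h).congr_deriv ?_
  rw [Estar_eq_two_mul_E2_sub_E2 h]
  ring

lemma differentiableAt_Estar {z : ℂ} (hz : 0 < z.im) : DifferentiableAt ℂ Estar z :=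
  (differentiableOn_estarSeries.differentiableAt (isOpen_ball.mem_nhds
    (mem_ball_zero_iff.mpr (norm_nome_lt_one hz)))).comp z differentiable_nome.differentiableAt

lemma hfun_eq (z : ℂ) : hfun z = etaQuotient 4 8 (2 * z) * Estar (2 * z) := by
  rw [hfun, etaQuotient, ← mul_assoc 2 2 z]
  norm_num

lemma hfun_add_one (z : ℂ) : hfun (z + 1) = hfun z := by
  have hfun_eq_nome (z : ℂ) : hfun z =
      (nome z)⁻¹ * etaQuotientSeries 4 8 (nome z ^ 2) * estarSeries (nome z ^ 2) := by
    rw [hfun_eq, etaQuotient_eq_exp_mul, Estar_eq_estarSeries, nome_two_mul]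
    congr 2
    rw [nome, ← Complex.exp_neg]
    push_cast
    ring_nf
  rw [hfun_eq_nome, hfun_eq_nome, nome_add_one]

lemma differentiableAt_hfun {z : ℂ} (hz : 0 < z.im) : DifferentiableAt ℂ hfun z := by
  have hz2 : 0 < (2 * z).im := by simpa using hz
  have etaQuotient_diff : DifferentiableAt ℂ (etaQuotient 4 8) (2 * z) :=
    (hasDerivAt_etaQuotient 4 8 (w := ⟨2 * z, hz2⟩) (τ := ⟨2 * (2 * z), by simpa using hz⟩)
      rfl).differentiableAt
  rw [funext hfun_eq]
  exact (etaQuotient_diff.mul (differentiableAt_Estar hz2)).comp z (by fun_prop)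

theorem hfun_sq {z : ℂ} (hz : 0 < z.im) : hfun z ^ 2 = etaQuotient 24 24 (2 * z) + 64 := by
  have key := etaQuotient_mul_Estar_sq ⟨2 * z, by simpa using hz⟩
  rw [← key, hfun_eq, etaQuotient, etaQuotient, coe_mk]
  ring

theorem hfun_mul_deriv_hfun {z : ℂ} (hz : 0 < z.im) :
    hfun z * deriv hfun z = -(2 * π * I) * (Estar (2 * z) * (hfun z ^ 2 - 64)) := by
  have hz2 : 0 < (2 * z).im := by simpa using hz
  have deriv_sq : HasDerivAt (fun z ↦ hfun z ^ 2) (2 * hfun z * deriv hfun z) z := by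
    simpa using (differentiableAt_hfun hz).hasDerivAt.fun_pow 2
  have deriv_etaQuotient := ((hasDerivAt_etaQuotient_self 24 (w := ⟨2 * z, hz2⟩)
    (τ := ⟨2 * (2 * z), by simpa using hz⟩) rfl).comp z (hasDerivAt_const_mul 2)).add_const 64
  have eventually_hfun_sq :
      (fun z ↦ hfun z ^ 2) =ᶠ[𝓝 z] fun z ↦ etaQuotient 24 24 (2 * z) + 64 := by
    filter_upwards [isOpen_upperHalfPlaneSet.mem_nhds hz] with w hw using hfun_sq hw
  have key := deriv_sq.unique (deriv_etaQuotient.congr_of_eventuallyEq eventually_hfun_sq)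
  rw [hfun_sq hz]
  push_cast at key
  linear_combination key / 2

theorem hasDerivAt_hfun_pow (m : ℕ) {z : ℂ} (hz : 0 < z.im) :
    HasDerivAt (fun z ↦ hfun z ^ (m + 2))
      (-(2 * π * I * (m + 2)) * (Estar (2 * z) * (hfun z ^ (m + 2) - 64 * hfun z ^ m))) z := by
  refine ((differentiableAt_hfun hz).hasDerivAt.fun_pow (m + 2)).congr_deriv ?_
  rw [show m + 2 - 1 = m + 1 by rfl]
  push_cast
  linear_combination (m + 2) * hfun z ^ m * hfun_mul_deriv_hfun hz

end Derivative

/-- For every `m ≥ 0`, the constant term (coefficient of `q⁰` in any Laurent expansion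
`Σ_{n≥−N} c(n)qⁿ`, valid on `ℍ`) of `E*(2τ)(h(τ)^{m+2} − 64h(τ)^m)` vanishes. -/
theorem stmt14 (m : ℕ) (c : ℤ → ℂ) (N : ℕ) (hsupp : ∀ n : ℤ, n < -(N : ℤ) → c n = 0)
    (hexp : ∀ τ : ℂ, 0 < τ.im →
      HasSum (fun n : ℤ => c n * nome τ ^ n)
        (Estar (2 * τ) * (hfun τ ^ (m + 2) - 64 * hfun τ ^ m))) :
    c 0 = 0 := by
  have factor_ne : -(2 * π * I * (m + 2)) ≠ 0 := by
    have : (m + 2 : ℂ) ≠ 0 := by exact_mod_cast (m + 1).succ_ne_zero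
    simp [Real.pi_ne_zero, this]
  refine coeff_zero_eq_zero_of_hasDerivAt
    (g := fun z ↦ (-(2 * π * I * (m + 2)))⁻¹ * hfun z ^ (m + 2)) (fun z hz ↦ ?_)
    (fun z ↦ by rw [hfun_add_one]) hexp
  exact ((hasDerivAt_hfun_pow m hz).const_mul _).congr_deriv (inv_mul_cancel_left₀ factor_ne _)
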